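/- arXiv:1903.00708 — 3 statements merged into one kernel-verified Lean document; each statement's English description precedes it below -/
import Mathlib

section
/- Let X : Ω → ℝ^p and Y : Ω → ℝ^q be random vectors on a probability space, and let μ be a measure on ℝ^p × ℝ^q that is absolutely continuous with respect to Lebesgue measure with a density that is positive Lebesgue-almost everywhere. Define the distance covariance (as a Lebesgue integral with values in [0,∞]) by T(X,Y;μ) = ∫_{ℝ^p×ℝ^q} |φ_{X,Y}(s,t) − φ_X(s)φ_Y(t)|² μ(ds,dt). Then T(X,Y;μ) = 0 if and only if X and Y are independent. -/
open MeasureTheory ProbabilityTheory Complex ENNReal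

/-- The characteristic function of a random vector `X : Ω → ℝ^p`. -/
noncomputable def charFn {Ω : Type*} [MeasureSpace Ω] {p : ℕ}
    (X : Ω → EuclideanSpace ℝ (Fin p)) (s : EuclideanSpace ℝ (Fin p)) : ℂ :=
  ∫ ω, Complex.exp (Complex.I * ((inner ℝ s (X ω) : ℝ) : ℂ)) ∂(ℙ : Measure Ω)

/-- The joint characteristic function of a pair of random vectors. -/
noncomputable def jointCharFn {Ω : Type*} [MeasureSpace Ω] {p q : ℕ}
    (X : Ω → EuclideanSpace ℝ (Fin p)) (Y : Ω → EuclideanSpace ℝ (Fin q))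
    (s : EuclideanSpace ℝ (Fin p)) (t : EuclideanSpace ℝ (Fin q)) : ℂ :=
  ∫ ω, Complex.exp (Complex.I * (((inner ℝ s (X ω) : ℝ) + (inner ℝ t (Y ω) : ℝ) : ℝ) : ℂ))
    ∂(ℙ : Measure Ω)

/-- The distance covariance of `X` and `Y` with respect to the weight measure `μ`,
taken as a Lebesgue integral with values in `[0,∞]`. -/
noncomputable def distCov {Ω : Type*} [MeasureSpace Ω] {p q : ℕ}
    (X : Ω → EuclideanSpace ℝ (Fin p)) (Y : Ω → EuclideanSpace ℝ (Fin q))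
    (μ : Measure (EuclideanSpace ℝ (Fin p) × EuclideanSpace ℝ (Fin q))) : ℝ≥0∞ :=
  ∫⁻ st, ENNReal.ofReal
    (‖jointCharFn X Y st.1 st.2 - charFn X st.1 * charFn Y st.2‖ ^ 2) ∂μ

/-- The joint characteristic function is continuous. -/
lemma continuous_jointCharFn_aux {Ω : Type*} [MeasureSpace Ω]
    [IsProbabilityMeasure (ℙ : Measure Ω)] {p q : ℕ}
    (X : Ω → EuclideanSpace ℝ (Fin p)) (Y : Ω → EuclideanSpace ℝ (Fin q))
    (hX : Measurable X) (hY : Measurable Y) :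
    Continuous (fun st : EuclideanSpace ℝ (Fin p) × EuclideanSpace ℝ (Fin q) =>
      jointCharFn X Y st.1 st.2) := by
  unfold jointCharFn
  refine continuous_of_dominated (bound := fun _ => 1) ?_ ?_ (integrable_const _) ?_
  · intro st
    have : Measurable fun ω => Complex.exp (Complex.I *
        (((inner ℝ st.1 (X ω) : ℝ) + (inner ℝ st.2 (Y ω) : ℝ) : ℝ) : ℂ)) := by fun_prop
    exact this.aestronglyMeasurable
  · intro st
    refine Filter.Eventually.of_forall fun ω => ?_
    rw [Complex.norm_exp_I_mul_ofReal]
  · exact Filter.Eventually.of_forall fun ω => by fun_prop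

/-- The characteristic function is continuous. -/
lemma continuous_charFn_aux {Ω : Type*} [MeasureSpace Ω]
    [IsProbabilityMeasure (ℙ : Measure Ω)] {p : ℕ}
    (X : Ω → EuclideanSpace ℝ (Fin p)) (hX : Measurable X) : Continuous (charFn X) := by
  have h := (continuous_jointCharFn_aux X X hX hX).comp
    (Continuous.prodMk continuous_id (continuous_const (y := (0 : EuclideanSpace ℝ (Fin p)))))
  convert h using 1
  ext s
  simp [charFn, jointCharFn]

lemma charFn_eq_charFun_aux {Ω : Type*} [MeasureSpace Ω] {p : ℕ}
    (X : Ω → EuclideanSpace ℝ (Fin p)) (hX : Measurable X) (s : EuclideanSpace ℝ (Fin p)) :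
    charFn X s = charFun ((ℙ : Measure Ω).map X) s := by
  rw [charFun_apply, integral_map hX.aemeasurable (by fun_prop), charFn]
  simp only [mul_comm Complex.I, real_inner_comm]

lemma jointCharFn_eq_charFun_aux {Ω : Type*} [MeasureSpace Ω] {p q : ℕ}
    (X : Ω → EuclideanSpace ℝ (Fin p)) (Y : Ω → EuclideanSpace ℝ (Fin q))
    (hX : Measurable X) (hY : Measurable Y)
    (t : WithLp 2 (EuclideanSpace ℝ (Fin p) × EuclideanSpace ℝ (Fin q))) :
    jointCharFn X Y t.fst t.snd =
      charFun ((ℙ : Measure Ω).map (fun ω => WithLp.toLp 2 (X ω, Y ω))) t := by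
  rw [charFun_apply, integral_map (by fun_prop) (by fun_prop), jointCharFn]
  refine integral_congr_ae (Filter.Eventually.of_forall fun ω => ?_)
  simp only [mul_comm Complex.I, WithLp.prod_inner_apply]
  rw [real_inner_comm (X ω) t.fst, real_inner_comm (Y ω) t.snd]
  rfl

/-- If the weight measure `μ` has an a.e. positive density with respect to Lebesgue
measure, then the distance covariance vanishes if and only if `X` and `Y` are
independent. -/
theorem distCov_eq_zero_iff_indepFun
    {Ω : Type*} [MeasureSpace Ω] [IsProbabilityMeasure (ℙ : Measure Ω)]
    {p q : ℕ} (X : Ω → EuclideanSpace ℝ (Fin p)) (Y : Ω → EuclideanSpace ℝ (Fin q))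
    (hX : Measurable X) (hY : Measurable Y)
    (μ : Measure (EuclideanSpace ℝ (Fin p) × EuclideanSpace ℝ (Fin q)))
    (f : EuclideanSpace ℝ (Fin p) × EuclideanSpace ℝ (Fin q) → ℝ≥0∞)
    (hf : Measurable f)
    (hμ : μ = (volume : Measure (EuclideanSpace ℝ (Fin p) × EuclideanSpace ℝ (Fin q))).withDensity f)
    (hfpos : ∀ᵐ st ∂(volume : Measure (EuclideanSpace ℝ (Fin p) × EuclideanSpace ℝ (Fin q))),
      0 < f st) :
    distCov X Y μ = 0 ↔ IndepFun X Y ℙ := by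
  have key : IndepFun X Y ℙ ↔ ∀ st : EuclideanSpace ℝ (Fin p) × EuclideanSpace ℝ (Fin q),
      jointCharFn X Y st.1 st.2 = charFn X st.1 * charFn Y st.2 := by
    rw [indepFun_iff_charFun_prod hX.aemeasurable hY.aemeasurable]
    constructor
    · intro h st
      have := h (WithLp.toLp 2 st)
      rw [← jointCharFn_eq_charFun_aux X Y hX hY, ← charFn_eq_charFun_aux X hX,
        ← charFn_eq_charFun_aux Y hY] at this
      exact this
    · intro h t
      rw [← jointCharFn_eq_charFun_aux X Y hX hY, ← charFn_eq_charFun_aux X hX,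
        ← charFn_eq_charFun_aux Y hY]
      exact h (t.fst, t.snd)
  have hJ := continuous_jointCharFn_aux X Y hX hY
  have hP : Continuous (fun st : EuclideanSpace ℝ (Fin p) × EuclideanSpace ℝ (Fin q) =>
      charFn X st.1 * charFn Y st.2) :=
    ((continuous_charFn_aux X hX).comp continuous_fst).mul
      ((continuous_charFn_aux Y hY).comp continuous_snd)
  rw [key]
  constructor
  · intro h
    unfold distCov at h
    have hm : Measurable (fun st : EuclideanSpace ℝ (Fin p) × EuclideanSpace ℝ (Fin q) =>
        ENNReal.ofReal (‖jointCharFn X Y st.1 st.2 - charFn X st.1 * charFn Y st.2‖ ^ 2)) :=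
      (((hJ.sub hP).norm.pow 2).measurable).ennreal_ofReal
    rw [lintegral_eq_zero_iff hm, hμ, Filter.EventuallyEq, ae_withDensity_iff hf] at h
    have hae : (fun st : EuclideanSpace ℝ (Fin p) × EuclideanSpace ℝ (Fin q) =>
        jointCharFn X Y st.1 st.2) =ᵐ[volume] fun st => charFn X st.1 * charFn Y st.2 := by
      filter_upwards [h, hfpos] with st h1 h2
      have h3 := h1 h2.ne'
      simp only [Pi.zero_apply, ENNReal.ofReal_eq_zero] at h3
      have h4 : ‖jointCharFn X Y st.1 st.2 - charFn X st.1 * charFn Y st.2‖ = 0 :=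
        pow_eq_zero_iff (two_ne_zero) |>.1 (le_antisymm h3 (sq_nonneg _))
      exact sub_eq_zero.1 (norm_eq_zero.1 h4)
    exact congrFun (Measure.eq_of_ae_eq hae hJ hP)
  · intro h
    simp [distCov, h]
end

section
/- Let α ∈ (0,2], let X : Ω → ℝ^p and Y : Ω → ℝ^q be random vectors with E[|X|^α·|Y|^α + |X|^α + |Y|^α] < ∞, and let μ be a measure on ℝ^p × ℝ^q satisfying ∫_{ℝ^p×ℝ^q} (1 ∧ |s|^α)(1 ∧ |t|^α) μ(ds,dt) < ∞. Then the distance covariance T(X,Y;μ) = ∫_{ℝ^p×ℝ^q} |φ_{X,Y}(s,t) − φ_X(s)φ_Y(t)|² μ(ds,dt) is finite. -/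
open MeasureTheory ProbabilityTheory Complex ENNReal

lemma aux_pt {E : Type*} [NormedAddCommGroup E] [InnerProductSpace ℝ E] (s x : E) (α : ℝ)
    (hα : α ∈ Set.Ioc (0 : ℝ) 2) :
    ‖Complex.exp (Complex.I * ((inner ℝ s x : ℝ) : ℂ)) - 1‖ ^ 2 ≤
      4 * min 1 (‖s‖ ^ α) * (1 + ‖x‖ ^ α) := by
  have h1 : ‖Complex.exp (Complex.I * ((inner ℝ s x : ℝ) : ℂ)) - 1‖ ≤ ‖s‖ * ‖x‖ :=
    (Real.norm_exp_I_mul_ofReal_sub_one_le).trans (norm_inner_le_norm s x)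
  have h2 : ‖Complex.exp (Complex.I * ((inner ℝ s x : ℝ) : ℂ)) - 1‖ ≤ 2 := by
    refine (norm_sub_le _ _).trans ?_
    rw [mul_comm, Complex.norm_exp_ofReal_mul_I]
    norm_num
  set u := ‖Complex.exp (Complex.I * ((inner ℝ s x : ℝ) : ℂ)) - 1‖
  have hu : 0 ≤ u := norm_nonneg _
  have hs : 0 ≤ ‖s‖ ^ α := by positivity
  have hx : 0 ≤ ‖x‖ ^ α := by positivity
  have h3 : u ^ 2 ≤ 4 * (‖s‖ ^ α * ‖x‖ ^ α) := by
    rw [← Real.mul_rpow (norm_nonneg _) (norm_nonneg _)]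
    have hz : 0 ≤ ‖s‖ * ‖x‖ := by positivity
    generalize ‖s‖ * ‖x‖ = z at *
    by_cases h : z ≤ 1
    · rcases hz.eq_or_lt with h0 | h0
      · have : u = 0 := by linarith
        have h4 := Real.rpow_nonneg hz α
        rw [this]; linarith
      · have : z ^ (2 : ℝ) ≤ z ^ α := Real.rpow_le_rpow_of_exponent_ge h0 h hα.2
        rw [Real.rpow_two] at this
        nlinarith
    · have := Real.one_le_rpow (le_of_not_ge h) hα.1.le
      nlinarith
  rcases le_total 1 (‖s‖ ^ α) with h | h
  · rw [min_eq_left h]; nlinarith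
  · rw [min_eq_right h]; nlinarith

lemma aux_cs {Ω : Type*} [MeasurableSpace Ω] (P : Measure Ω) [IsProbabilityMeasure P]
    (U V : Ω → ℂ) (hU : MemLp U 2 P) (hV : MemLp V 2 P) :
    ‖∫ ω, U ω * V ω ∂P‖ ^ 2 ≤ (∫ ω, ‖U ω‖ ^ 2 ∂P) * ∫ ω, ‖V ω‖ ^ 2 ∂P := by
  have h := integral_mul_le_Lp_mul_Lq_of_nonneg (μ := P) (f := fun ω => ‖U ω‖)
    (g := fun ω => ‖V ω‖) Real.HolderConjugate.two_two
    (Filter.Eventually.of_forall fun _ => norm_nonneg _)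
    (Filter.Eventually.of_forall fun _ => norm_nonneg _)
    (by simpa using hU.norm) (by simpa using hV.norm)
  simp only [Real.rpow_two, ← Real.sqrt_eq_rpow] at h
  have h0 : ‖∫ ω, U ω * V ω ∂P‖ ≤ ∫ ω, ‖U ω‖ * ‖V ω‖ ∂P := by
    refine (norm_integral_le_integral_norm _).trans (le_of_eq ?_)
    simp
  have hA : 0 ≤ ∫ ω, ‖U ω‖ ^ 2 ∂P := integral_nonneg fun _ => by positivity
  have hB : 0 ≤ ∫ ω, ‖V ω‖ ^ 2 ∂P := integral_nonneg fun _ => by positivity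
  calc _ ≤ (√(∫ ω, ‖U ω‖ ^ 2 ∂P) * √(∫ ω, ‖V ω‖ ^ 2 ∂P)) ^ 2 := by
        gcongr; exact h0.trans h
    _ = _ := by rw [mul_pow, Real.sq_sqrt hA, Real.sq_sqrt hB]

lemma aux_cov {Ω : Type*} [MeasurableSpace Ω] (P : Measure Ω) [IsProbabilityMeasure P]
    (U V : Ω → ℂ) (hU : MemLp U 2 P) (hV : MemLp V 2 P) :
    ‖(∫ ω, U ω * V ω ∂P) - (∫ ω, U ω ∂P) * ∫ ω, V ω ∂P‖ ^ 2 ≤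
      4 * ((∫ ω, ‖U ω‖ ^ 2 ∂P) * ∫ ω, ‖V ω‖ ^ 2 ∂P) := by
  have h1 := aux_cs P U V hU hV
  have h2 := aux_cs P U (fun _ => 1) hU (memLp_const 1)
  have h3 := aux_cs P V (fun _ => 1) hV (memLp_const 1)
  simp only [mul_one, norm_one, one_pow, integral_const, probReal_univ, smul_eq_mul] at h2 h3
  have h4 : ‖(∫ ω, U ω ∂P) * ∫ ω, V ω ∂P‖ ^ 2 ≤ (∫ ω, ‖U ω‖ ^ 2 ∂P) * ∫ ω, ‖V ω‖ ^ 2 ∂P := by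
    rw [norm_mul, mul_pow]
    gcongr
  have h5 := norm_sub_le (∫ ω, U ω * V ω ∂P) ((∫ ω, U ω ∂P) * ∫ ω, V ω ∂P)
  have h6 := norm_nonneg ((∫ ω, U ω * V ω ∂P) - (∫ ω, U ω ∂P) * ∫ ω, V ω ∂P)
  nlinarith [sq_nonneg (‖∫ ω, U ω * V ω ∂P‖ - ‖(∫ ω, U ω ∂P) * ∫ ω, V ω ∂P‖)]

lemma aux_memLp {Ω : Type*} [MeasurableSpace Ω] (P : Measure Ω) [IsProbabilityMeasure P] {p : ℕ}
    (X : Ω → EuclideanSpace ℝ (Fin p)) (hX : Measurable X) (s : EuclideanSpace ℝ (Fin p)) :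
    MemLp (fun ω => Complex.exp (Complex.I * ((inner ℝ s (X ω) : ℝ) : ℂ))) ⊤ P := by
  refine memLp_top_of_bound (C := 1) (by fun_prop) (Filter.Eventually.of_forall fun ω => ?_)
  rw [mul_comm, Complex.norm_exp_ofReal_mul_I]

lemma aux_int {Ω : Type*} [MeasurableSpace Ω] (P : Measure Ω) [IsProbabilityMeasure P] {p : ℕ}
    (X : Ω → EuclideanSpace ℝ (Fin p)) (hX : Measurable X) (α : ℝ)
    (hα : α ∈ Set.Ioc (0 : ℝ) 2) (hi : Integrable (fun ω => ‖X ω‖ ^ α) P)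
    (s : EuclideanSpace ℝ (Fin p)) :
    ∫ ω, ‖Complex.exp (Complex.I * ((inner ℝ s (X ω) : ℝ) : ℂ)) - 1‖ ^ 2 ∂P ≤
      4 * min 1 (‖s‖ ^ α) * (1 + ∫ ω, ‖X ω‖ ^ α ∂P) := by
  have h := integral_mono_of_nonneg (μ := P)
    (f := fun ω => ‖Complex.exp (Complex.I * ((inner ℝ s (X ω) : ℝ) : ℂ)) - 1‖ ^ 2)
    (g := fun ω => 4 * min 1 (‖s‖ ^ α) * (1 + ‖X ω‖ ^ α))
    (Filter.Eventually.of_forall fun _ => by positivity)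
    (((integrable_const 1).add hi).const_mul _)
    (Filter.Eventually.of_forall fun ω => aux_pt s (X ω) α hα)
  refine h.trans (le_of_eq ?_)
  rw [integral_const_mul, integral_add (integrable_const 1) hi]
  simp

/-- If `α ∈ (0,2]`, the moment `E[|X|^α |Y|^α + |X|^α + |Y|^α]` is finite and the
weight measure integrates `(1 ∧ |s|^α)(1 ∧ |t|^α)`, then the distance covariance is
finite. -/
theorem distCov_lt_top
    {Ω : Type*} [MeasureSpace Ω] [IsProbabilityMeasure (ℙ : Measure Ω)]
    {p q : ℕ} (X : Ω → EuclideanSpace ℝ (Fin p)) (Y : Ω → EuclideanSpace ℝ (Fin q))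
    (hX : Measurable X) (hY : Measurable Y)
    (α : ℝ) (hα : α ∈ Set.Ioc (0 : ℝ) 2)
    (hmom : (∫⁻ ω, ENNReal.ofReal
        (‖X ω‖ ^ α * ‖Y ω‖ ^ α + ‖X ω‖ ^ α + ‖Y ω‖ ^ α) ∂(ℙ : Measure Ω)) < ∞)
    (μ : Measure (EuclideanSpace ℝ (Fin p) × EuclideanSpace ℝ (Fin q)))
    (hμ : (∫⁻ st, ENNReal.ofReal
        (min 1 (‖st.1‖ ^ α) * min 1 (‖st.2‖ ^ α)) ∂μ) < ∞) :
    distCov X Y μ < ∞ := by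
  have hα0 := hα.1.le
  have key : ∀ (f : Ω → ℝ), Measurable f → (∀ ω, 0 ≤ f ω) →
      (∀ ω, f ω ≤ ‖X ω‖ ^ α * ‖Y ω‖ ^ α + ‖X ω‖ ^ α + ‖Y ω‖ ^ α) →
      Integrable f (ℙ : Measure Ω) := by
    intro f hf h0 hle
    refine ⟨hf.aestronglyMeasurable, ?_⟩
    rw [hasFiniteIntegral_iff_ofReal (Filter.Eventually.of_forall h0)]
    exact (lintegral_mono fun ω => ENNReal.ofReal_le_ofReal (hle ω)).trans_lt hmom
  have hiX : Integrable (fun ω => ‖X ω‖ ^ α) (ℙ : Measure Ω) := by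
    refine key _ (by fun_prop) (fun ω => by positivity) (fun ω => ?_)
    have : 0 ≤ ‖X ω‖ ^ α * ‖Y ω‖ ^ α := by positivity
    have : 0 ≤ ‖Y ω‖ ^ α := by positivity
    linarith
  have hiY : Integrable (fun ω => ‖Y ω‖ ^ α) (ℙ : Measure Ω) := by
    refine key _ (by fun_prop) (fun ω => by positivity) (fun ω => ?_)
    have : 0 ≤ ‖X ω‖ ^ α * ‖Y ω‖ ^ α := by positivity
    have : 0 ≤ ‖X ω‖ ^ α := by positivity
    linarith
  set C : ℝ := 64 * ((1 + ∫ ω, ‖X ω‖ ^ α) * (1 + ∫ ω, ‖Y ω‖ ^ α)) with hC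
  have hcX : 0 ≤ ∫ ω, ‖X ω‖ ^ α := integral_nonneg fun _ => by positivity
  have hcY : 0 ≤ ∫ ω, ‖Y ω‖ ^ α := integral_nonneg fun _ => by positivity
  have hC0 : 0 ≤ C := by positivity
  have main : ∀ s t, ‖jointCharFn X Y s t - charFn X s * charFn Y t‖ ^ 2 ≤
      C * (min 1 (‖s‖ ^ α) * min 1 (‖t‖ ^ α)) := by
    intro s t
    have hEX := aux_memLp (ℙ : Measure Ω) X hX s
    have hEY := aux_memLp (ℙ : Measure Ω) Y hY t
    have e : jointCharFn X Y s t = ∫ ω, Complex.exp (Complex.I * ((inner ℝ s (X ω) : ℝ) : ℂ)) *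
        Complex.exp (Complex.I * ((inner ℝ t (Y ω) : ℝ) : ℂ)) := by
      unfold jointCharFn
      congr 1; ext ω
      rw [← Complex.exp_add]; push_cast; ring_nf
    have hIX := aux_int (ℙ : Measure Ω) X hX α hα hiX s
    have hIY := aux_int (ℙ : Measure Ω) Y hY α hα hiY t
    rw [e]
    unfold charFn
    set F := fun ω => Complex.exp (Complex.I * ((inner ℝ s (X ω) : ℝ) : ℂ)) with hF
    set G := fun ω => Complex.exp (Complex.I * ((inner ℝ t (Y ω) : ℝ) : ℂ)) with hG
    have hF2 : MemLp F 2 (ℙ : Measure Ω) := hEX.mono_exponent le_top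
    have hG2 : MemLp G 2 (ℙ : Measure Ω) := hEY.mono_exponent le_top
    have hFi : Integrable F (ℙ : Measure Ω) := hF2.integrable (by norm_num)
    have hGi : Integrable G (ℙ : Measure Ω) := hG2.integrable (by norm_num)
    have hFG : Integrable (fun ω => F ω * G ω) (ℙ : Measure Ω) := hF2.integrable_mul hG2
    have hcov := aux_cov (ℙ : Measure Ω) (fun ω => F ω - 1) (fun ω => G ω - 1)
      (hF2.sub (memLp_const 1)) (hG2.sub (memLp_const 1))
    have e1 : ∫ ω, (F ω - 1) = (∫ ω, F ω) - 1 := by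
      rw [integral_sub hFi (integrable_const 1)]; simp
    have e2 : ∫ ω, (G ω - 1) = (∫ ω, G ω) - 1 := by
      rw [integral_sub hGi (integrable_const 1)]; simp
    have e3 : ∫ ω, (F ω - 1) * (G ω - 1) = (∫ ω, F ω * G ω) - (∫ ω, F ω) - ((∫ ω, G ω) - 1) := by
      have h5 : Integrable (fun ω => F ω * G ω - F ω) (ℙ : Measure Ω) := hFG.sub hFi
      have h6 : Integrable (fun ω => G ω - 1) (ℙ : Measure Ω) := hGi.sub (integrable_const 1)
      rw [← e2, ← integral_sub hFG hFi, ← integral_sub h5 h6]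
      congr 1; ext ω; ring
    rw [e1, e2, e3] at hcov
    have e4 : (∫ ω, F ω * G ω) - (∫ ω, F ω) - ((∫ ω, G ω) - 1) -
        ((∫ ω, F ω) - 1) * ((∫ ω, G ω) - 1) = (∫ ω, F ω * G ω) - (∫ ω, F ω) * ∫ ω, G ω := by ring
    rw [e4] at hcov
    refine hcov.trans ?_
    have hm : 0 ≤ min 1 (‖s‖ ^ α) := le_min zero_le_one (by positivity)
    have := mul_le_mul hIX hIY (integral_nonneg fun _ => by positivity) (by positivity)
    rw [hC]
    linarith
  unfold distCov
  calc _ ≤ ∫⁻ st, ENNReal.ofReal C * ENNReal.ofReal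
        (min 1 (‖st.1‖ ^ α) * min 1 (‖st.2‖ ^ α)) ∂μ := by
        refine lintegral_mono fun st => ?_
        rw [← ENNReal.ofReal_mul hC0]
        exact ENNReal.ofReal_le_ofReal (main st.1 st.2)
    _ = ENNReal.ofReal C * _ := lintegral_const_mul' _ _ ENNReal.ofReal_ne_top
    _ < ∞ := ENNReal.mul_lt_top ENNReal.ofReal_lt_top hμ
end

section
/- Let (Z_j)_{j≥1} be independent and identically distributed real-valued random variables with common characteristic function φ_Z(s) = E[exp(isZ_1)], and fix an integer h ≥ 1 and s, t ∈ ℝ. For n > h define C_n(s,t) = (1/n)∑_{j=1}^{n−h} e^{i(sZ_j + tZ_{j+h})} − ((1/n)∑_{j=1}^{n−h} e^{isZ_j})·((1/n)∑_{j=1}^{n−h} e^{itZ_{j+h}}). Then √n·C_n(s,t) − (1/√n)∑_{j=1}^{n−h} (e^{isZ_j} − φ_Z(s))·(e^{itZ_{j+h}} − φ_Z(t)) converges to 0 in probability as n → ∞. -/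
open MeasureTheory ProbabilityTheory Complex Finset Filter


lemma aux_second_moment {Ω : Type*} [MeasurableSpace Ω] (μ : Measure Ω) [IsProbabilityMeasure μ]
    (X : ℕ → Ω → ℂ) (hm : ∀ j, Measurable (X j)) (hb : ∀ j ω, ‖X j ω‖ ≤ 2)
    (h0 : ∀ j, ∫ ω, X j ω ∂μ = 0) (hi : ∀ i j, i ≠ j → IndepFun (X i) (X j) μ)
    (S : Finset ℕ) :
    Integrable (fun ω => ‖∑ j ∈ S, X j ω‖ ^ 2) μ ∧
    ∫ ω, ‖∑ j ∈ S, X j ω‖ ^ 2 ∂μ ≤ 4 * S.card := by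
  have hint : ∀ i j, Integrable (fun ω => X i ω * (starRingEnd ℂ) (X j ω)) μ := by
    intro i j
    refine Integrable.of_bound (C := 4) ?_ (ae_of_all _ fun ω => ?_)
    · exact ((hm i).mul (Complex.continuous_conj.measurable.comp (hm j))).aestronglyMeasurable
    · rw [norm_mul, RCLike.norm_conj]
      nlinarith [hb i ω, hb j ω, norm_nonneg (X i ω), norm_nonneg (X j ω)]
  have hexp : ∀ ω, ((‖∑ j ∈ S, X j ω‖ ^ 2 : ℝ) : ℂ)
      = ∑ i ∈ S, ∑ j ∈ S, X i ω * (starRingEnd ℂ) (X j ω) := by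
    intro ω
    rw [← Finset.sum_mul_sum, ← map_sum, Complex.mul_conj, Complex.normSq_eq_norm_sq]
  have hoff : ∀ i j, i ≠ j → ∫ ω, X i ω * (starRingEnd ℂ) (X j ω) ∂μ = 0 := by
    intro i j hij
    have hI : IndepFun (X i) (fun ω => (starRingEnd ℂ) (X j ω)) μ :=
      (hi i j hij).comp measurable_id Complex.continuous_conj.measurable
    rw [hI.integral_fun_mul_eq_mul_integral (hm i).aestronglyMeasurable
      (Complex.continuous_conj.measurable.comp (hm j)).aestronglyMeasurable, h0, zero_mul]
  have hintS : Integrable (fun ω => ((‖∑ j ∈ S, X j ω‖ ^ 2 : ℝ) : ℂ)) μ := by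
    simp_rw [hexp]
    exact integrable_finsetSum _ fun i _ => integrable_finsetSum _ fun j _ => hint i j
  refine ⟨hintS.re, ?_⟩
  have key : ((∫ ω, ‖∑ j ∈ S, X j ω‖ ^ 2 ∂μ : ℝ) : ℂ)
      = ((∑ i ∈ S, ∫ ω, ‖X i ω‖ ^ 2 ∂μ : ℝ) : ℂ) := by
    rw [← integral_complex_ofReal]
    simp_rw [hexp]
    rw [integral_finsetSum _ fun i _ => integrable_finsetSum _ fun j _ => hint i j]
    push_cast
    refine Finset.sum_congr rfl fun i hiS => ?_
    rw [integral_finsetSum _ fun j _ => hint i j, Finset.sum_eq_single i]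
    · rw [← integral_complex_ofReal]
      congr 1
      ext ω
      rw [Complex.mul_conj, Complex.normSq_eq_norm_sq]
    · intro j _ hj
      exact hoff i j hj.symm
    · intro hn
      exact absurd hiS hn
  rw [Complex.ofReal_inj] at key
  rw [key]
  calc ∑ i ∈ S, ∫ ω, ‖X i ω‖ ^ 2 ∂μ ≤ ∑ i ∈ S, (4 : ℝ) := by
        refine Finset.sum_le_sum fun i _ => ?_
        have := norm_integral_le_of_norm_le_const (μ := μ) (f := fun ω => ‖X i ω‖ ^ 2) (C := 4)
          (ae_of_all _ fun ω => by
            rw [Real.norm_of_nonneg (by positivity)]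
            nlinarith [hb i ω, norm_nonneg (X i ω)])
        simpa using (le_abs_self _).trans this
    _ = 4 * S.card := by simp [mul_comm]

lemma aux_alg (r n m h : ℂ) (hn : n ≠ 0) (hr : r * r = n) (hmn : m = n - h)
    (a b : ℕ → ℂ) (p q : ℂ) (S : Finset ℕ) (hS : (S.card : ℂ) = m) :
    r * (n⁻¹ * ∑ j ∈ S, a j * b j - (n⁻¹ * ∑ j ∈ S, a j) * (n⁻¹ * ∑ j ∈ S, b j))
      - r⁻¹ * ∑ j ∈ S, (a j - p) * (b j - q)
    = r⁻¹ * (h * n⁻¹ * (q * ∑ j ∈ S, (a j - p) + p * ∑ j ∈ S, (b j - q)) + m * n⁻¹ * h * (p * q)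
      - n⁻¹ * ((∑ j ∈ S, (a j - p)) * ∑ j ∈ S, (b j - q))) := by
  have hr0 : r ≠ 0 := by
    rintro rfl
    exact hn (by rw [← hr]; ring)
  simp only [sub_mul, mul_sub, Finset.sum_sub_distrib, ← Finset.sum_mul, ← Finset.mul_sum,
    Finset.sum_const, nsmul_eq_mul, hS]
  generalize ∑ j ∈ S, a j * b j = AB
  generalize ∑ j ∈ S, a j = A
  generalize ∑ j ∈ S, b j = B
  have hh : h = n - m := by rw [hmn]; ring
  subst hh
  subst hr
  field_simp
  ring

lemma aux_norm (r : ℝ) (n m h : ℕ) (hn : 0 < n) (hr : r * r = n) (hr0 : 0 < r) (hmn : m ≤ n)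
    (A B p q : ℂ) (hp : ‖p‖ ≤ 1) (hq : ‖q‖ ≤ 1) (hA : ‖A‖ ≤ 2 * n) (hB : ‖B‖ ≤ 2 * n) :
    ‖(r : ℂ)⁻¹ * ((h : ℂ) * (n : ℂ)⁻¹ * (q * A + p * B) + (m : ℂ) * (n : ℂ)⁻¹ * h * (p * q)
      - (n : ℂ)⁻¹ * (A * B))‖ ≤ r⁻¹ * (5 * h + (n : ℝ)⁻¹ * (‖A‖ ^ 2 + ‖B‖ ^ 2)) := by
  have hn' : (0 : ℝ) < n := by exact_mod_cast hn
  rw [norm_mul, norm_inv, Complex.norm_real, Real.norm_of_nonneg hr0.le]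
  refine mul_le_mul_of_nonneg_left ?_ (by positivity)
  have e1 : ‖(h : ℂ) * (n : ℂ)⁻¹ * (q * A + p * B)‖ ≤ 4 * h := by
    have : ‖q * A + p * B‖ ≤ 4 * n := by
      refine (norm_add_le _ _).trans ?_
      rw [norm_mul, norm_mul]
      nlinarith [norm_nonneg A, norm_nonneg B, norm_nonneg p, norm_nonneg q]
    rw [norm_mul, norm_mul, norm_inv, Complex.norm_natCast, Complex.norm_natCast]
    calc (h : ℝ) * (n : ℝ)⁻¹ * ‖q * A + p * B‖ ≤ (h : ℝ) * (n : ℝ)⁻¹ * (4 * n) := by gcongr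
      _ = 4 * h := by field_simp
  have e2 : ‖(m : ℂ) * (n : ℂ)⁻¹ * h * (p * q)‖ ≤ h := by
    rw [norm_mul, norm_mul, norm_mul, norm_mul, norm_inv, Complex.norm_natCast,
      Complex.norm_natCast, Complex.norm_natCast]
    have h1 : (m : ℝ) * (n : ℝ)⁻¹ ≤ 1 := by
      rw [← div_eq_mul_inv, div_le_one hn']
      exact_mod_cast hmn
    calc (m : ℝ) * (n : ℝ)⁻¹ * h * (‖p‖ * ‖q‖) ≤ 1 * h * (1 * 1) := by gcongr
      _ = h := by ring
  have e3 : ‖(n : ℂ)⁻¹ * (A * B)‖ ≤ (n : ℝ)⁻¹ * (‖A‖ ^ 2 + ‖B‖ ^ 2) := by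
    rw [norm_mul, norm_mul, norm_inv, Complex.norm_natCast]
    refine mul_le_mul_of_nonneg_left ?_ (by positivity)
    nlinarith [sq_nonneg (‖A‖ - ‖B‖), sq_nonneg ‖A‖, sq_nonneg ‖B‖]
  refine (norm_sub_le _ _).trans ?_
  have := norm_add_le ((h : ℂ) * (n : ℂ)⁻¹ * (q * A + p * B)) ((m : ℂ) * (n : ℂ)⁻¹ * h * (p * q))
  linarith

/-- For an iid sequence `(Z_j)_{j ≥ 1}` and a fixed lag `h ≥ 1`, the difference between
`√n C_n(s,t)` and the martingale-type sum
`n^{-1/2} ∑_{j=1}^{n-h} (e^{isZ_j} − φ_Z(s))(e^{itZ_{j+h}} − φ_Z(t))`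
converges to `0` in probability. -/
theorem sqrt_n_Cn_approx
    {Ω : Type*} [MeasureSpace Ω] [IsProbabilityMeasure (ℙ : Measure Ω)]
    (Z : ℕ → Ω → ℝ) (hZmeas : ∀ j, Measurable (Z j))
    (hindep : iIndepFun Z ℙ)
    (hident : ∀ j, Measure.map (Z j) (ℙ : Measure Ω) = Measure.map (Z 1) (ℙ : Measure Ω))
    (h : ℕ) (hh : 1 ≤ h) (s t : ℝ)
    (φZ : ℝ → ℂ)
    (hφZ : ∀ r : ℝ, φZ r = ∫ ω, Complex.exp (Complex.I * ((r * Z 1 ω : ℝ) : ℂ))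
      ∂(ℙ : Measure Ω)) :
    TendstoInMeasure (ℙ : Measure Ω)
      (fun n : ℕ => fun ω : Ω =>
        ((Real.sqrt n : ℝ) : ℂ) *
          ((n : ℂ)⁻¹ * ∑ j ∈ Finset.Icc 1 (n - h),
              Complex.exp (Complex.I * ((s * Z j ω + t * Z (j + h) ω : ℝ) : ℂ)) -
            ((n : ℂ)⁻¹ * ∑ j ∈ Finset.Icc 1 (n - h),
                Complex.exp (Complex.I * ((s * Z j ω : ℝ) : ℂ))) *
              ((n : ℂ)⁻¹ * ∑ j ∈ Finset.Icc 1 (n - h),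
                Complex.exp (Complex.I * ((t * Z (j + h) ω : ℝ) : ℂ)))) -
          ((Real.sqrt n : ℝ) : ℂ)⁻¹ * ∑ j ∈ Finset.Icc 1 (n - h),
            (Complex.exp (Complex.I * ((s * Z j ω : ℝ) : ℂ)) - φZ s) *
              (Complex.exp (Complex.I * ((t * Z (j + h) ω : ℝ) : ℂ)) - φZ t))
      atTop (fun _ => (0 : ℂ)) := by
  have hE : ∀ (r x : ℝ), ‖Complex.exp (Complex.I * ((r * x : ℝ) : ℂ))‖ = 1 := by
    intro r x
    rw [mul_comm, Complex.norm_exp_ofReal_mul_I]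
  have hEm : ∀ r : ℝ, Measurable fun x : ℝ => Complex.exp (Complex.I * ((r * x : ℝ) : ℂ)) := by
    intro r
    fun_prop
  have hEint : ∀ (r : ℝ) (j : ℕ),
      Integrable (fun ω => Complex.exp (Complex.I * ((r * Z j ω : ℝ) : ℂ))) (ℙ : Measure Ω) := by
    intro r j
    refine Integrable.of_bound (C := 1) ((hEm r).comp (hZmeas j)).aestronglyMeasurable
      (ae_of_all _ fun ω => (hE r (Z j ω)).le)
  have hφ1 : ∀ r, ‖φZ r‖ ≤ 1 := by
    intro r
    rw [hφZ]
    simpa using norm_integral_le_of_norm_le_const (μ := (ℙ : Measure Ω)) (C := 1)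
      (ae_of_all _ fun ω => (hE r (Z 1 ω)).le)
  have hmean : ∀ r j, ∫ ω, Complex.exp (Complex.I * ((r * Z j ω : ℝ) : ℂ)) ∂(ℙ : Measure Ω)
      = φZ r := by
    intro r j
    rw [hφZ]
    have e := fun k => integral_map (μ := (ℙ : Measure Ω)) (hZmeas k).aemeasurable
      (hEm r).aestronglyMeasurable
    rw [← e j, ← e 1, hident j]
  have hXb : ∀ (r : ℝ) (j : ℕ) ω,
      ‖Complex.exp (Complex.I * ((r * Z j ω : ℝ) : ℂ)) - φZ r‖ ≤ 2 := by
    intro r j ω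
    refine (norm_sub_le _ _).trans ?_
    linarith [hE r (Z j ω), hφ1 r]
  have hmom : ∀ (r : ℝ) (k : ℕ) (S : Finset ℕ), _ := fun r k S =>
    aux_second_moment (ℙ : Measure Ω)
      (fun j ω => Complex.exp (Complex.I * ((r * Z (j + k) ω : ℝ) : ℂ)) - φZ r)
      (fun j => ((hEm r).comp (hZmeas (j + k))).sub_const _)
      (fun j ω => hXb r (j + k) ω)
      (fun j => by
        rw [integral_sub (hEint r (j + k)) (integrable_const _), hmean]
        simp)
      (fun i j hij => (hindep.indepFun (show i + k ≠ j + k by omega)).comp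
        ((hEm r).sub_const (φZ r)) ((hEm r).sub_const (φZ r))) S
  have hsum : ∀ (r : ℝ) (k n : ℕ) ω, ‖∑ j ∈ Finset.Icc 1 (n - h),
      (Complex.exp (Complex.I * ((r * Z (j + k) ω : ℝ) : ℂ)) - φZ r)‖ ≤ 2 * n := by
    intro r k n ω
    refine (norm_sum_le_of_le _ fun j _ => hXb r (j + k) ω).trans ?_
    simp only [Finset.sum_const, Nat.card_Icc, nsmul_eq_mul]
    have : ((n - h + 1 - 1 : ℕ) : ℝ) ≤ n := by exact_mod_cast (by omega)
    linarith
  refine tendstoInMeasure_of_tendsto_eLpNorm (p := 1) one_ne_zero ?_ ?_ ?_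
  · intro n
    refine Measurable.aestronglyMeasurable ?_
    have := hZmeas
    fun_prop
  · exact aestronglyMeasurable_const
  have hlim : Tendsto (fun n : ℕ => ENNReal.ofReal ((Real.sqrt n)⁻¹ * (5 * h + 8))) atTop
      (nhds 0) := by
    rw [← ENNReal.ofReal_zero]
    refine ENNReal.tendsto_ofReal ?_
    have : Tendsto (fun n : ℕ => (Real.sqrt n)⁻¹) atTop (nhds 0) :=
      tendsto_inv_atTop_zero.comp (Real.tendsto_sqrt_atTop.comp tendsto_natCast_atTop_atTop)
    simpa using this.mul_const (5 * (h : ℝ) + 8)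
  refine tendsto_of_tendsto_of_tendsto_of_le_of_le' tendsto_const_nhds hlim
    (Eventually.of_forall fun _ => zero_le) ?_
  filter_upwards [eventually_ge_atTop (h + 1)] with n hn
  have hn0 : 0 < n := by omega
  have hnR : (0 : ℝ) < n := by exact_mod_cast hn0
  have hr0 : 0 < Real.sqrt n := Real.sqrt_pos.2 hnR
  have hrr : Real.sqrt n * Real.sqrt n = n := Real.mul_self_sqrt hnR.le
  obtain ⟨iA, bA⟩ := hmom s 0 (Finset.Icc 1 (n - h))
  obtain ⟨iB, bB⟩ := hmom t h (Finset.Icc 1 (n - h))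
  simp only [add_zero] at iA bA
  have hcard : (((Finset.Icc 1 (n - h)).card : ℕ) : ℝ) ≤ n := by
    rw [Nat.card_Icc]
    exact_mod_cast (by omega)
  set A : Ω → ℂ := fun ω => ∑ j ∈ Finset.Icc 1 (n - h),
    (Complex.exp (Complex.I * ((s * Z j ω : ℝ) : ℂ)) - φZ s) with hA
  set B : Ω → ℂ := fun ω => ∑ j ∈ Finset.Icc 1 (n - h),
    (Complex.exp (Complex.I * ((t * Z (j + h) ω : ℝ) : ℂ)) - φZ t) with hB
  change Integrable (fun ω => ‖A ω‖ ^ 2) _ at iA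
  change Integrable (fun ω => ‖B ω‖ ^ 2) _ at iB
  change ∫ ω, ‖A ω‖ ^ 2 ∂_ ≤ _ at bA
  change ∫ ω, ‖B ω‖ ^ 2 ∂_ ≤ _ at bB
  have hGi : Integrable (fun ω => (Real.sqrt n)⁻¹ *
      (5 * h + (n : ℝ)⁻¹ * (‖A ω‖ ^ 2 + ‖B ω‖ ^ 2))) (ℙ : Measure Ω) :=
    (((integrable_const _).add ((iA.add iB).const_mul _))).const_mul _
  refine (eLpNorm_mono_real (g := fun ω => (Real.sqrt n)⁻¹ *
      (5 * h + (n : ℝ)⁻¹ * (‖A ω‖ ^ 2 + ‖B ω‖ ^ 2))) fun ω => ?_).trans ?_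
  · have hsA := hsum s 0 n ω
    have hsB := hsum t h n ω
    simp only [add_zero] at hsA
    have key := aux_norm (Real.sqrt n) n (n - h) h hn0 hrr hr0 (by omega) (A ω) (B ω) (φZ s) (φZ t)
      (hφ1 s) (hφ1 t) hsA hsB
    have alg := aux_alg (Real.sqrt n : ℂ) n ((n - h : ℕ) : ℂ) h (by exact_mod_cast hn0.ne')
      (by exact_mod_cast hrr) (by rw [Nat.cast_sub (by omega)])
      (fun j => Complex.exp (Complex.I * ((s * Z j ω : ℝ) : ℂ)))
      (fun j => Complex.exp (Complex.I * ((t * Z (j + h) ω : ℝ) : ℂ))) (φZ s) (φZ t)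
      (Finset.Icc 1 (n - h)) (by simp)
    rw [← alg] at key
    refine le_trans (le_of_eq ?_) key
    simp only [Pi.sub_apply, sub_zero, ← Complex.exp_add, ← mul_add, ← Complex.ofReal_add]
  · rw [eLpNorm_one_eq_lintegral_enorm, ← ofReal_integral_norm_eq_lintegral_enorm hGi]
    refine ENNReal.ofReal_le_ofReal ?_
    have : ∀ ω, ‖(Real.sqrt n)⁻¹ * (5 * h + (n : ℝ)⁻¹ * (‖A ω‖ ^ 2 + ‖B ω‖ ^ 2))‖
        = (Real.sqrt n)⁻¹ * (5 * h + (n : ℝ)⁻¹ * (‖A ω‖ ^ 2 + ‖B ω‖ ^ 2)) :=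
      fun ω => Real.norm_of_nonneg (by positivity)
    simp_rw [this]
    have iAB : Integrable (fun ω => (n : ℝ)⁻¹ * (‖A ω‖ ^ 2 + ‖B ω‖ ^ 2)) (ℙ : Measure Ω) :=
      (iA.add iB).const_mul _
    rw [integral_const_mul, integral_add (integrable_const _) iAB,
      integral_const_mul (n : ℝ)⁻¹]
    rw [show ∫ ω, (‖A ω‖ ^ 2 + ‖B ω‖ ^ 2) ∂(ℙ : Measure Ω) = _ from integral_add iA iB]
    refine mul_le_mul_of_nonneg_left ?_ (by positivity)
    simp only [integral_const, probReal_univ, one_smul]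
    have h8 : (n : ℝ)⁻¹ * (∫ ω, ‖A ω‖ ^ 2 ∂(ℙ : Measure Ω) + ∫ ω, ‖B ω‖ ^ 2 ∂(ℙ : Measure Ω))
        ≤ (n : ℝ)⁻¹ * (8 * n) :=
      mul_le_mul_of_nonneg_left (by linarith) (by positivity)
    have : (n : ℝ)⁻¹ * (8 * n) = 8 := by field_simp
    linarith
end
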